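/- (Sjöstrand) Let G be a connected finite simple graph and let D be a distribution on G with D(v) ≥ 1 for every vertex v. Then π(G, D) equals the smallest number n with the property that whenever n pebbles are placed on a single vertex u (i.e., starting from the distribution n·δ_u, for any vertex u), the distribution D is reachable. In particular, an amount of pebbles reaches D from every starting distribution if and only if it reaches D from every starting distribution concentrated on one vertex. -/

import Mathlib

open scoped BigOperators

/-- A single pebbling move on a simple graph: remove two pebbles from `u`
and add one pebble on an adjacent vertex `v`. -/
def PebMove {V : Type*} [DecidableEq V] (G : SimpleGraph V) (D D' : V → ℕ) : Prop :=
  ∃ u v, G.Adj u v ∧ 2 ≤ D u ∧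
    D' = fun w => if w = u then D u - 2 else if w = v then D v + 1 else D w

/-- `D'` is reachable from `D`: some sequence of pebbling moves starting at `D`
produces a distribution containing `D'`. -/
def Reaches {V : Type*} [DecidableEq V] (G : SimpleGraph V) (D D' : V → ℕ) : Prop :=
  ∃ D'', Relation.ReflTransGen (PebMove G) D D'' ∧ ∀ v, D' v ≤ D'' v

/-- Total number of pebbles of a distribution. -/
def pebTotal {V : Type*} [Fintype V] (D : V → ℕ) : ℕ := ∑ v, D v

/-- The pebbling number of a set `S` of target distributions on `G`:
the least `N` (possibly `∞`) such that every member of `S` is reachable from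
every distribution with at least `N` pebbles in total. -/
noncomputable def pebSet {V : Type*} [Fintype V] [DecidableEq V] (G : SimpleGraph V)
    (S : Set (V → ℕ)) : ℕ∞ :=
  sInf {N : ℕ∞ | ∀ D₀ : V → ℕ, N ≤ (pebTotal D₀ : ℕ∞) → ∀ D ∈ S, Reaches G D₀ D}

/-- The pebbling number of a single target distribution. -/
noncomputable def peb {V : Type*} [Fintype V] [DecidableEq V] (G : SimpleGraph V)
    (D : V → ℕ) : ℕ∞ :=
  pebSet G {D}

/-- The distribution with `t` pebbles on `v` and none elsewhere. -/
def unitDist {V : Type*} [DecidableEq V] (t : ℕ) (v : V) : V → ℕ :=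
  fun w => if w = v then t else 0

/-!
Call a vertex fat (thin) if it carries more (fewer) pebbles than `D` demands. If some vertex is
thin and some are fat, choose a fat `u` and a thin `t` as close to each other as possible. By this
choice no inner vertex of a geodesic from `u` to `t` is thin, so each carries a pebble, as `D` is
positive. Hence two pebbles from `u` can be pushed along the geodesic, each inner vertex
contributing one pebble, and `t` gains a pebble. No new fat vertex arises.

Weigh a pebble on `w` by `2 ^ d`, where `d` is the distance from `w` to a set `S` of vertices that
contains all fat ones. For `S` the set of all vertices, the weight is the number of pebbles.
Shrinking `S` to the set of fat vertices does not lower the weight, and neither does pushing along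
the geodesic afterwards. Each push uses up pebbles, so the process ends; suppose it ends with no fat
vertex but some thin ones. Then for any `u` in the last `S`, the weight of `D` relative to `{u}`
exceeds the initial number of pebbles. But moves never increase the weight relative to `{u}`, so `D`
cannot be reached from that many pebbles on `u` either.
-/

open scoped Matrix

section SetDist

variable {V : Type*} {G : SimpleGraph V} {S T : Set V} {u v w : V}

/-- The distance in `G` from the set `S` to the vertex `v`. It is `0` if `S` is empty, and
also if `S` meets another component than that of `v`, where `SimpleGraph.dist` is `0`. -/
noncomputable def setDist (G : SimpleGraph V) (S : Set V) (v : V) : ℕ :=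
  ⨅ u : S, G.dist u v

theorem setDist_le_dist (hu : u ∈ S) : setDist G S v ≤ G.dist u v :=
  ciInf_le' (fun u : S ↦ G.dist u v) ⟨u, hu⟩

theorem exists_dist_eq_setDist (hS : S.Nonempty) : ∃ u ∈ S, G.dist u v = setDist G S v := by
  have := hS.to_subtype
  obtain ⟨u, hu⟩ := ciInf_mem fun u : S ↦ G.dist u v
  exact ⟨u, u.2, hu⟩

theorem setDist_empty : setDist G ∅ v = 0 := by
  simp [setDist]

theorem setDist_singleton : setDist G {u} v = G.dist u v := by
  simp [setDist]

theorem setDist_eq_zero_of_mem (hv : v ∈ S) : setDist G S v = 0 :=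
  Nat.le_zero.mp <| (setDist_le_dist hv).trans_eq G.dist_self

theorem setDist_anti (hS : S.Nonempty) (hST : S ⊆ T) : setDist G T v ≤ setDist G S v := by
  obtain ⟨u, hu, huv⟩ := exists_dist_eq_setDist (G := G) (v := v) hS
  exact huv ▸ setDist_le_dist (hST hu)

theorem setDist_le_succ_of_adj (h : G.Adj v w) : setDist G S w ≤ setDist G S v + 1 := by
  obtain rfl | hS := S.eq_empty_or_nonempty
  · simp [setDist_empty]
  · obtain ⟨u, hu, huv⟩ := exists_dist_eq_setDist (G := G) (v := v) hS
    have huw : G.dist u w ≤ G.dist u v + 1 := by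
      have := h.diff_dist_adj (u := u)
      lia
    exact huv ▸ (setDist_le_dist hu).trans huw

theorem exists_closest_pair (G : SimpleGraph V) (hS : S.Nonempty) (hT : T.Nonempty) :
    ∃ u ∈ S, ∃ t ∈ T, ∀ u' ∈ S, ∀ t' ∈ T, G.dist u t ≤ G.dist u' t' := by
  obtain ⟨⟨u, t⟩, ⟨hu, ht⟩, hmin⟩ := exists_minimalFor_of_wellFoundedLT
    (· ∈ S ×ˢ T) (fun x ↦ G.dist x.1 x.2) (hS.prod hT)
  exact ⟨u, hu, t, ht, fun u' hu' t' ht' ↦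
    (le_total _ _).elim id (hmin (show (u', t') ∈ S ×ˢ T from ⟨hu', ht'⟩))⟩

theorem dist_lt_dist_of_mem_support {t : V} {W : G.Walk u t} (hW : W.length = G.dist u t)
    (hv : v ∈ W.support) (hvt : v ≠ t) : G.dist u v < G.dist u t := by
  classical
  calc G.dist u v ≤ (W.takeUntil v hv).length := SimpleGraph.dist_le _
    _ < W.length := W.length_takeUntil_lt_length hv hvt
    _ = G.dist u t := hW

theorem two_pow_add_sum_support_le {δ : V → ℕ} (hδ : ∀ v w, G.Adj v w → δ w ≤ δ v + 1)
    (W : G.Walk u v) {k : ℕ} (hk : δ u ≤ k) :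
    2 ^ k + (W.support.map (2 ^ δ ·)).sum ≤ 2 * 2 ^ (k + W.length) := by
  induction W generalizing k with
  | nil =>
    have : 2 ^ δ _ ≤ 2 ^ k := Nat.pow_le_pow_right two_pos hk
    simpa [two_mul] using this
  | @cons u x v h W ih =>
    have hu : 2 ^ δ u ≤ 2 ^ k := Nat.pow_le_pow_right two_pos hk
    have hx := ih ((hδ u x h).trans (Nat.succ_le_succ hk))
    rw [SimpleGraph.Walk.support_cons, SimpleGraph.Walk.length_cons, List.map_cons, List.sum_cons]
    rw [Nat.succ_add_eq_add_succ, pow_succ 2 k] at hx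
    lia

end SetDist

section Moves

variable {V : Type*} [DecidableEq V] {G : SimpleGraph V} {p q : V → ℕ} {u v t : V}

theorem pebMove_iff : PebMove G p q ↔
    ∃ u v, G.Adj u v ∧ q + Pi.single u 2 = p + Pi.single v 1 := by
  refine exists₂_congr fun u v ↦ and_congr_right fun huv ↦ ⟨?_, fun h ↦ ⟨?_, ?_⟩⟩
  · rintro ⟨hu, rfl⟩
    ext w
    have := huv.ne
    simp only [Pi.add_apply, Pi.single_apply]
    grind
  · have := congrFun h u
    simp only [Pi.add_apply, Pi.single_eq_same, Pi.single_eq_of_ne huv.ne] at this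
    lia
  · ext w
    have := congrFun h w
    have := huv.ne
    simp only [Pi.add_apply, Pi.single_apply] at *
    grind

theorem exists_pebMove (huv : G.Adj u v) (hu : 2 ≤ p u) :
    ∃ q, PebMove G p q ∧ q + Pi.single u 2 = p + Pi.single v 1 := by
  have hle : Pi.single u 2 ≤ p + Pi.single v 1 := fun w ↦ by
    simp only [Pi.add_apply, Pi.single_apply]
    grind
  have h := tsub_add_cancel_of_le hle
  exact ⟨_, pebMove_iff.mpr ⟨u, v, huv, h⟩, h⟩

/-- `q` arises from `p` by pushing two pebbles from `u` along the walk `W`: for a path, `u` loses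
two pebbles, each inner vertex loses one (it receives one and spends two), and `t` gains one. Losses
are written on the side of `q` to avoid subtraction; on a one-vertex walk the equation says
`q = p`. -/
def IsPush (W : G.Walk u t) (p q : V → ℕ) : Prop :=
  q + Pi.single u 1 + (fun w ↦ W.support.count w) = p + Pi.single t 2

theorem exists_isPush {W : G.Walk u t} (hW : W.IsPath)
    (hu : u ≠ t → 2 ≤ p u) (hp : ∀ w ∈ W.support, w ≠ t → 1 ≤ p w) :
    ∃ q, Relation.ReflTransGen (PebMove G) p q ∧ IsPush W p q := by
  induction W generalizing p with
  | nil =>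
    refine ⟨p, .refl, ?_⟩
    ext w
    simp only [SimpleGraph.Walk.support_nil, Pi.add_apply, Pi.single_apply, List.count_singleton]
    grind
  | @cons u x t h W ih =>
    rw [SimpleGraph.Walk.cons_isPath_iff] at hW
    obtain ⟨p', hpp', hp'⟩ := exists_pebMove h (hu fun hut ↦ hW.2 (hut ▸ W.end_mem_support))
    replace hp' (w : V) := congrFun hp' w
    simp only [Pi.add_apply, Pi.single_apply] at hp'
    have hpW (w : V) (hw : w ∈ W.support) (hwt : w ≠ t) : 1 ≤ p w :=
      hp w (by simp [hw]) hwt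
    have hx (hxt : x ≠ t) : 2 ≤ p' x := by
      have := hpW x W.start_mem_support hxt
      grind [h.ne]
    have hp'W (w : V) (hw : w ∈ W.support) (hwt : w ≠ t) : 1 ≤ p' w := by
      have := hpW w hw hwt
      grind
    obtain ⟨q, hp'q, hq⟩ := ih hW.1 hx hp'W
    refine ⟨q, .head hpp' hp'q, funext fun w ↦ ?_⟩
    have := congrFun hq w
    simp only [SimpleGraph.Walk.support_cons, List.count_cons, Pi.add_apply, Pi.single_apply]
      at this ⊢
    grind

end Moves

section Weight

variable {V : Type*} [Fintype V] {G : SimpleGraph V} {S T : Set V} {p q D : V → ℕ} {u t : V}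

/-- The weight of the distribution `p` relative to the set `S`: a pebble at distance `d` from `S`
weighs `2 ^ d`. -/
noncomputable def weight (G : SimpleGraph V) (S : Set V) (p : V → ℕ) : ℕ :=
  p ⬝ᵥ fun w ↦ 2 ^ setDist G S w

theorem weight_univ : weight G Set.univ p = pebTotal p := by
  simp [weight, pebTotal, dotProduct, setDist_eq_zero_of_mem]

theorem weight_strictMono : StrictMono (weight G S) := fun p q hpq ↦ by
  obtain ⟨hle, t, ht⟩ := Pi.lt_def.mp hpq
  exact Finset.sum_lt_sum (fun w _ ↦ Nat.mul_le_mul_right _ (hle w))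
    ⟨t, Finset.mem_univ t, Nat.mul_lt_mul_of_pos_right ht (Nat.two_pow_pos _)⟩

theorem weight_anti (hS : S.Nonempty) (hST : S ⊆ T) : weight G T p ≤ weight G S p :=
  dotProduct_le_dotProduct_of_nonneg_left
    (fun _ ↦ Nat.pow_le_pow_right two_pos (setDist_anti hS hST)) fun _ ↦ Nat.zero_le _

variable [DecidableEq V]

theorem weight_unitDist (n : ℕ) (u : V) : weight G {u} (unitDist n u) = n := by
  simp [weight, dotProduct, unitDist, setDist_singleton]

theorem pebTotal_unitDist (n : ℕ) (u : V) : pebTotal (unitDist n u) = n := by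
  simp [pebTotal, unitDist]

theorem PebMove.weight_le (h : PebMove G p q) (S : Set V) : weight G S q ≤ weight G S p := by
  obtain ⟨u, v, huv, h⟩ := pebMove_iff.mp h
  have hsum := congrArg (· ⬝ᵥ fun w ↦ 2 ^ setDist G S w) h
  simp only [add_dotProduct, single_dotProduct] at hsum
  have hv : 2 ^ setDist G S v ≤ 2 * 2 ^ setDist G S u :=
    pow_succ' 2 (setDist G S u) ▸ Nat.pow_le_pow_right two_pos (setDist_le_succ_of_adj huv)
  rw [weight, weight]
  lia

theorem Reaches.weight_le (h : Reaches G p D) (S : Set V) : weight G S D ≤ weight G S p := by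
  obtain ⟨q, hpq, hDq⟩ := h
  refine (weight_strictMono.monotone hDq).trans ?_
  clear hDq
  induction hpq with
  | refl => exact le_rfl
  | tail _ hmove ih => exact (hmove.weight_le S).trans ih

theorem count_dotProduct (l : List V) (g : V → ℕ) :
    (fun w ↦ l.count w) ⬝ᵥ g = (l.map g).sum := by
  simp only [dotProduct, Finset.sum_list_map_count, smul_eq_mul]
  refine (Finset.sum_subset (Finset.subset_univ _) fun w _ hw ↦ ?_).symm
  simp [List.count_eq_zero_of_not_mem (mt List.mem_toFinset.mpr hw)]

theorem IsPush.dotProduct_add_sum_support {W : G.Walk u t} (h : IsPush W p q) (g : V → ℕ) :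
    q ⬝ᵥ g + g u + (W.support.map g).sum = p ⬝ᵥ g + 2 * g t := by
  simpa only [add_dotProduct, single_dotProduct, one_mul, count_dotProduct]
    using congrArg (· ⬝ᵥ g) h

theorem IsPush.pebTotal_add_length {W : G.Walk u t} (h : IsPush W p q) :
    pebTotal q + W.length = pebTotal p := by
  have := h.dotProduct_add_sum_support fun _ ↦ 1
  simp only [dotProduct, mul_one, List.map_const', List.sum_replicate,
    SimpleGraph.Walk.length_support, smul_eq_mul] at this
  rw [pebTotal, pebTotal]
  lia

theorem IsPush.weight_le {W : G.Walk u t} (h : IsPush W p q) (hu : u ∈ S)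
    (hW : W.length = setDist G S t) : weight G S p ≤ weight G S q := by
  have hsum := h.dotProduct_add_sum_support fun w ↦ 2 ^ setDist G S w
  have hsupp := two_pow_add_sum_support_le (fun _ _ ↦ setDist_le_succ_of_adj) W
    (setDist_eq_zero_of_mem (G := G) hu).le
  simp only [setDist_eq_zero_of_mem hu, hW, zero_add] at hsum hsupp
  rw [weight, weight]
  lia

end Weight

section Sjostrand

variable {V : Type*} {G : SimpleGraph V} {S : Set V} {p D : V → ℕ}

/-- The vertices that are fat in `p`, in Sjöstrand's terminology: they carry more pebbles than the
target distribution `D` asks for. Exchanging `p` and `D` gives the thin vertices. -/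
def fat (D p : V → ℕ) : Set V := {v | D v < p v}

theorem mem_fat {v : V} : v ∈ fat D p ↔ D v < p v := Iff.rfl

theorem IsPush.fat_subset [DecidableEq V] {q : V → ℕ} {u t : V} {W : G.Walk u t}
    (h : IsPush W p q) (ht : t ∈ fat p D) : fat D q ⊆ fat D p := by
  intro w hw
  have hcount : 1 ≤ W.support.count t := List.count_pos_iff.mpr W.end_mem_support
  have := congrFun h w
  simp only [Pi.add_apply, Pi.single_apply, mem_fat] at *
  grind

variable [Fintype V]

theorem fat_nonempty_of_weight_le {u : V} (hu : u ∈ S) (hle : weight G {u} D ≤ weight G S p)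
    (hthin : (fat p D).Nonempty) : (fat D p).Nonempty := by
  by_contra hfat
  have hpD : p < D := Pi.lt_def.mpr ⟨fun v ↦ not_lt.mp fun hv ↦ hfat ⟨v, hv⟩, hthin⟩
  refine hle.not_gt ?_
  calc weight G S p ≤ weight G {u} p :=
        weight_anti (Set.singleton_nonempty u) (Set.singleton_subset_iff.mpr hu)
    _ < weight G {u} D := weight_strictMono hpD

variable [DecidableEq V]

theorem exists_reflTransGen_pebTotal_lt (hG : G.Preconnected) (hD : ∀ v, 1 ≤ D v)
    (hfat : (fat D p).Nonempty) (hthin : (fat p D).Nonempty) :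
    ∃ q, Relation.ReflTransGen (PebMove G) p q ∧ fat D q ⊆ fat D p ∧
      weight G (fat D p) p ≤ weight G (fat D p) q ∧ pebTotal q < pebTotal p := by
  obtain ⟨u, hu, t, ht, hmin⟩ := exists_closest_pair G hfat hthin
  have hut : u ≠ t := by
    rintro rfl
    exact lt_asymm (mem_fat.mp hu) ht
  obtain ⟨W, hWpath, hW⟩ := (hG u t).exists_path_of_dist
  have hinner (w : V) (hw : w ∈ W.support) (hwt : w ≠ t) : 1 ≤ p w := by
    have hthin : w ∉ fat p D := fun h ↦
      (hmin u hu w h).not_gt (dist_lt_dist_of_mem_support hW hw hwt)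
    exact (hD w).trans (not_lt.mp hthin)
  obtain ⟨q, hpq, hq⟩ := exists_isPush hWpath (fun _ ↦ (hD u).trans_lt hu) hinner
  have hdist : setDist G (fat D p) t = G.dist u t := by
    obtain ⟨u', hu', hu't⟩ := exists_dist_eq_setDist (G := G) (v := t) hfat
    exact (setDist_le_dist hu).antisymm (hu't ▸ hmin u' hu' t ht)
  have hlength : 0 < W.length := hW ▸ (hG u t).pos_dist_of_ne hut
  have htotal := hq.pebTotal_add_length
  exact ⟨q, hpq, hq.fat_subset ht, hq.weight_le hu (hW.trans hdist.symm), by lia⟩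

theorem reaches_of_forall_weight_le (hG : G.Preconnected) (hD : ∀ v, 1 ≤ D v) (hS : S.Nonempty)
    (hfat : fat D p ⊆ S) (hle : ∀ u ∈ S, weight G {u} D ≤ weight G S p) : Reaches G p D := by
  induction hm : pebTotal p using Nat.strong_induction_on generalizing p S with
  | _ m ih =>
    subst hm
    obtain hthin | hthin := (fat p D).eq_empty_or_nonempty
    · exact ⟨p, .refl, fun v ↦ not_lt.mp fun hv ↦ Set.eq_empty_iff_forall_notMem.mp hthin v hv⟩
    obtain ⟨u, hu⟩ := hS
    have hfatp := fat_nonempty_of_weight_le hu (hle u hu) hthin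
    obtain ⟨q, hpq, hfatq, hweight, htotal⟩ := exists_reflTransGen_pebTotal_lt hG hD hfatp hthin
    have hleq (u : V) (hu : u ∈ fat D p) : weight G {u} D ≤ weight G (fat D p) q :=
      calc weight G {u} D ≤ weight G S p := hle u (hfat hu)
        _ ≤ weight G (fat D p) p := weight_anti hfatp hfat
        _ ≤ weight G (fat D p) q := hweight
    obtain ⟨r, hqr, hDr⟩ := ih _ htotal hfatp hfatq hleq rfl
    exact ⟨r, hpq.trans hqr, hDr⟩

theorem reaches_of_forall_reaches_unitDist (hG : G.Connected) (hD : ∀ v, 1 ≤ D v)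
    (h : ∀ u, Reaches G (unitDist (pebTotal p) u) D) : Reaches G p D := by
  have := hG.nonempty
  refine reaches_of_forall_weight_le hG.preconnected hD Set.univ_nonempty (Set.subset_univ _)
    fun u _ ↦ ?_
  calc weight G {u} D ≤ weight G {u} (unitDist (pebTotal p) u) := (h u).weight_le {u}
    _ = weight G Set.univ p := by rw [weight_unitDist, weight_univ]

end Sjostrand

/-- Sjöstrand's theorem: for a target distribution with at least one pebble on
every vertex of a connected graph, the pebbling number equals the least `n`
such that `D` is reachable from `n` pebbles placed on any single vertex. -/
theorem sjostrand_cover_pebbling {V : Type*} [Fintype V] [DecidableEq V]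
    (G : SimpleGraph V) (hG : G.Connected) (D : V → ℕ) (hD : ∀ v, 1 ≤ D v) :
    peb G D =
      sInf {N : ℕ∞ | ∀ (u : V) (n : ℕ), N ≤ (n : ℕ∞) → Reaches G (unitDist n u) D} := by
  refine congrArg sInf (Set.ext fun N ↦ ⟨fun h u n hn ↦ ?_, fun h p hp D' hD' ↦ ?_⟩)
  · exact h (unitDist n u) (by rwa [pebTotal_unitDist]) D rfl
  · obtain rfl := hD'
    exact reaches_of_forall_reaches_unitDist hG hD fun u ↦ h u (pebTotal p) hp
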